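/- arXiv:2412.15160 — 6 statements merged into one kernel-verified Lean document; each statement's English description precedes it below -/
import Mathlib

section
/- Let α ∈ F_q^n have pairwise distinct entries, let v, w ∈ F_q^n have all entries nonzero, and let k, ℓ ≥ 1. Then GRS_k(α, v) ⋆ GRS_ℓ(α, w) = GRS_{k+ℓ−1}(α, v ⋆ w). -/
open Polynomial

/-- The evaluation map `f ↦ (v_1 f(α_1), …, v_n f(α_n))`. -/
noncomputable def ev {F : Type*} [Field F] {ι : Type*} (α v : ι → F) :
    Polynomial F →ₗ[F] (ι → F) where
  toFun f := fun i => v i * f.eval (α i)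
  map_add' f g := by ext i; simp [mul_add]
  map_smul' a f := by ext i; simp [smul_eq_mul]; ring

/-- The generalized Reed–Solomon code `GRS_k(α, v) = ev_{α,v}(F[x]_{<k})`. -/
noncomputable def GRS {F : Type*} [Field F] {ι : Type*} (k : ℕ) (α v : ι → F) :
    Submodule F (ι → F) :=
  (Polynomial.degreeLT F k).map (ev α v)

/-- The Schur (componentwise) product of two subspaces of `F^n`. -/
def schurProduct (F : Type*) [Field F] {ι : Type*} (A B : Submodule F (ι → F)) :
    Submodule F (ι → F) :=
  Submodule.span F {x | ∃ a ∈ A, ∃ b ∈ B, x = a * b}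

/-
In the algebra `ι → F` the Schur product of subspaces is the product of submodules, and `GRS k α v`
is the span of `v` times the image of `F[x]_{<k}` under the algebra homomorphism
`X ↦ α`. Algebra homomorphisms respect products of submodules, so everything reduces to
`F[x]_{<k} * F[x]_{<l} = F[x]_{<k+l-1}` for `k, l ≥ 1`, which holds because every monomial
`x ^ i` with `i ≤ (k - 1) + (l - 1)` factors as `x ^ a * x ^ b` with `a < k` and `b < l`.
-/

section DegreeBounded

variable {R : Type*} [CommSemiring R]

theorem degreeLE_mul_degreeLE (m n : ℕ) :
    degreeLE R m * degreeLE R n = degreeLE R (m + n : ℕ) := by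
  classical
  refine le_antisymm (Submodule.mul_le.2 fun p hp q hq ↦ ?_) ?_
  · rw [mem_degreeLE] at hp hq ⊢
    exact_mod_cast degree_mul_le_of_le hp hq
  · have X_pow_mem {a d : ℕ} (h : a ≤ d) : (X : R[X]) ^ a ∈ degreeLE R d :=
      mem_degreeLE.2 ((degree_X_pow_le a).trans (mod_cast h))
    rw [degreeLE_eq_span_X_pow, Submodule.span_le, Finset.coe_image, Set.image_subset_iff]
    intro i hi
    have hi : i ≤ m + n := Nat.lt_succ_iff.1 (Finset.mem_range.1 hi)
    have split : (X : R[X]) ^ i = X ^ min i m * X ^ (i - m) := by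
      rw [← pow_add]
      congr 1
      omega
    rw [Set.mem_preimage, split]
    exact Submodule.mul_mem_mul (X_pow_mem (min_le_right i m)) (X_pow_mem (by omega))

theorem degreeLT_mul_degreeLT {k l : ℕ} (hk : 0 < k) (hl : 0 < l) :
    degreeLT R k * degreeLT R l = degreeLT R (k + l - 1) := by
  obtain ⟨m, rfl⟩ := Nat.exists_eq_add_of_le' hk
  obtain ⟨n, rfl⟩ := Nat.exists_eq_add_of_le' hl
  have hmn : m + 1 + (n + 1) - 1 = m + n + 1 := by omega
  rw [hmn]
  simp only [degreeLT_succ_eq_degreeLE, degreeLE_mul_degreeLE]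

end DegreeBounded

section ReedSolomon

variable {F : Type*} [Field F] {ι : Type*}

theorem schurProduct_eq_mul (A B : Submodule F (ι → F)) : schurProduct F A B = A * B := by
  rw [Submodule.mul_eq_span_mul_set, schurProduct]
  congr 1
  ext x
  simp only [Set.mem_ofPred_eq, Set.mem_mul, SetLike.mem_coe, eq_comm]

theorem ev_eq_mul_aeval (α v : ι → F) (f : F[X]) : ev α v f = v * aeval α f := by
  ext i
  simp only [ev, LinearMap.coe_mk, AddHom.coe_mk, Pi.mul_apply, aeval_pi_apply₂, coe_aeval_eq_eval]

theorem GRS_eq_span_singleton_mul (k : ℕ) (α v : ι → F) :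
    GRS k α v = Submodule.span F {v} * (degreeLT F k).map (aeval α).toLinearMap := by
  ext x
  simp only [GRS, Submodule.mem_map, Submodule.mem_span_singleton_mul, exists_exists_and_eq_and,
    AlgHom.toLinearMap_apply, ev_eq_mul_aeval]

theorem stmt1_general (α v w : ι → F) {k l : ℕ} (hk : 1 ≤ k) (hl : 1 ≤ l) :
    schurProduct F (GRS k α v) (GRS l α w) = GRS (k + l - 1) α (v * w) := by
  simp only [schurProduct_eq_mul, GRS_eq_span_singleton_mul]
  rw [mul_mul_mul_comm, Submodule.span_mul_span, Set.singleton_mul_singleton,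
    ← Submodule.map_mul, degreeLT_mul_degreeLT hk hl]

end ReedSolomon

/-- `GRS_k(α, v) ⋆ GRS_ℓ(α, w) = GRS_{k+ℓ−1}(α, v ⋆ w)` for `α` with pairwise distinct
entries, `v, w` with all entries nonzero, and `k, ℓ ≥ 1`. -/
theorem stmt1 {F : Type*} [Field F] [Fintype F] {n : ℕ} (α v w : Fin n → F)
    (hα : Function.Injective α) (hv : ∀ i, v i ≠ 0) (hw : ∀ i, w i ≠ 0)
    {k l : ℕ} (hk : 1 ≤ k) (hl : 1 ≤ l) :
    schurProduct F (GRS k α v) (GRS l α w) = GRS (k + l - 1) α (v * w) :=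
  stmt1_general α v w hk hl
end

section
/- Let ℓ ≤ k ≤ n ≤ q, let α ∈ F_q^n have pairwise distinct entries and v ∈ F_q^n have all nonzero entries. Let h = (h_1,…,h_ℓ) be pairwise distinct elements of {0,…,k−1}, t = (t_1,…,t_ℓ) pairwise distinct elements of {1,…,n−k}, and η = (η_1,…,η_ℓ) ∈ (F_q \ {0})^ℓ. Then the TGRS code C = ev_{α,v}(P_{t,h,η}^{n,k}) is an ℓ-qGRS code with respect to α, v and dimension parameter k: namely C = C_0 ⊕ C_1, where C_0 = ev_{α,v}(span{x^i : 0 ≤ i ≤ k−1, i ∉ {h_1,…,h_ℓ}}) is a subspace of codimension ℓ of GRS_k(α, v), and C_1 = ev_{α,v}(span{x^{h_j} + η_j x^{k−1+t_j} : 1 ≤ j ≤ ℓ}) has dimension ℓ and satisfies C_1 ∩ GRS_k(α, v) = 0. -/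
open Polynomial

/-- The linear map `(f_0,…,f_{k−1}) ↦ Σ_{i<k} f_i x^i + Σ_j η_j f_{h_j} x^{k−1+t_j}`,
whose range is the twisted polynomial space `P_{t,h,η}^{n,k}`. -/
noncomputable def twistedMap {F : Type*} [Field F] (k : ℕ) {ℓ : ℕ}
    (t : Fin ℓ → ℕ) (h : Fin ℓ → Fin k) (η : Fin ℓ → F) :
    (Fin k → F) →ₗ[F] Polynomial F :=
  (∑ i : Fin k, (Polynomial.monomial (i : ℕ)).comp (LinearMap.proj i)) +
  ∑ j : Fin ℓ, (Polynomial.monomial (k - 1 + t j)).comp (η j • LinearMap.proj (h j))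

/-!
All summands live in the space of polynomials of degree less than `n`, on which evaluation at `n`
distinct points is injective, so the decomposition can be checked on polynomials. There, reading off
the coefficients at the exponents `k - 1 + t_j ≥ k` kills every polynomial of degree less than `k`
and sends the `j`-th twisted monomial to `η_j` times the `j`-th standard basis vector. This one
linear map shows both that the twisted monomials are linearly independent and that their span meets
the polynomials of degree less than `k` only in zero.
-/

open Module Submodule Set

section InjOn

variable {R M N : Type*} [Semiring R] [AddCommMonoid M] [AddCommMonoid N] [Module R M]
  [Module R N] {f : M →ₗ[R] N} {p q r : Submodule R M}

lemma finrank_map_eq_of_injOn (hf : InjOn f p) : finrank R (p.map f) = finrank R p := by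
  rw [← LinearMap.range_domRestrict]
  exact LinearMap.finrank_range_of_inj (injOn_iff_injective.1 hf)

lemma disjoint_map_of_injOn (hf : InjOn f r) (hp : p ≤ r) (hq : q ≤ r) (hpq : Disjoint p q) :
    Disjoint (p.map f) (q.map f) := by
  rw [Submodule.disjoint_def]
  rintro _ ⟨x, hx, rfl⟩ ⟨y, hy, hyx⟩
  obtain rfl : y = x := hf (hq hy) (hp hx) hyx
  rw [Submodule.disjoint_def.1 hpq y hx hy, map_zero]

end InjOn

section Polynomial

variable {R κ : Type*}

lemma X_pow_mem_degreeLT [Semiring R] {i k : ℕ} (hik : i < k) : (X ^ i : R[X]) ∈ degreeLT R k :=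
  mem_degreeLT.2 <| (degree_X_pow_le i).trans_lt (mod_cast hik)

lemma linearIndependent_X_pow [Semiring R] : LinearIndependent R fun i : ℕ => (X ^ i : R[X]) := by
  simpa only [coe_basisMonomials, X_pow_eq_monomial] using (basisMonomials R).linearIndependent

lemma finrank_degreeLT [Semiring R] [StrongRankCondition R] (k : ℕ) :
    finrank R (degreeLT R k) = k := by
  rw [(degreeLTEquiv R k).finrank_eq, finrank_fin_fun]

/-- The linear map recording the coefficients of a polynomial at the exponents `d j`, used to
separate twisted polynomials from those of degree less than `k` when every `d j` is at least `k`. -/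
noncomputable def coeffsAt [Semiring R] (d : κ → ℕ) : R[X] →ₗ[R] κ → R :=
  LinearMap.pi fun j => lcoeff R (d j)

lemma degreeLT_le_ker_coeffsAt [Semiring R] {d : κ → ℕ} {k : ℕ} (hd : ∀ j, k ≤ d j) :
    degreeLT R k ≤ LinearMap.ker (coeffsAt d) := by
  intro p hp
  ext j
  exact coeff_eq_zero_of_degree_lt ((mem_degreeLT.1 hp).trans_le (mod_cast hd j))

lemma coeffsAt_C_mul_X_pow [Semiring R] [DecidableEq κ] {d : κ → ℕ} (hd : Function.Injective d)
    (a : R) (j : κ) : coeffsAt d (C a * X ^ d j) = Pi.single j a := by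
  ext i
  simp [coeffsAt, coeff_X_pow, hd.eq_iff, Pi.single_apply]

variable [Ring R] [IsDomain R] {k : ℕ} {p : κ → R[X]} {d : κ → ℕ} {η : κ → R}

lemma linearIndependent_coeffsAt_add_C_mul_X_pow (hp : ∀ j, p j ∈ degreeLT R k)
    (hd : Function.Injective d) (hkd : ∀ j, k ≤ d j) (hη : ∀ j, η j ≠ 0) :
    LinearIndependent R (coeffsAt d ∘ fun j => p j + C (η j) * X ^ d j) := by
  classical
  have hsingle : (coeffsAt d ∘ fun j => p j + C (η j) * X ^ d j) =
      fun j => Pi.single j (η j) := by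
    funext j
    rw [Function.comp_apply, map_add, LinearMap.mem_ker.1 (degreeLT_le_ker_coeffsAt hkd (hp j)),
      zero_add, coeffsAt_C_mul_X_pow hd]
  exact hsingle ▸ Pi.linearIndependent_single_of_ne_zero hη

lemma disjoint_span_add_C_mul_X_pow_degreeLT (hp : ∀ j, p j ∈ degreeLT R k)
    (hd : Function.Injective d) (hkd : ∀ j, k ≤ d j) (hη : ∀ j, η j ≠ 0) :
    Disjoint (span R (range fun j => p j + C (η j) * X ^ d j)) (degreeLT R k) :=
  range_ker_disjoint (linearIndependent_coeffsAt_add_C_mul_X_pow hp hd hkd hη) |>.mono_right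
    (degreeLT_le_ker_coeffsAt hkd)

end Polynomial

section Twisted

variable {F : Type*} [Field F] {k : ℕ}

/-- The span of the monomials `x ^ i`, `i < k`, whose coefficient carries no twist; its image
under `ev α v` is the summand `C₀` of a twisted code. -/
noncomputable def untwistedSpan (F : Type*) [Field F] {κ : Type*} (h : κ → Fin k) :
    Submodule F F[X] :=
  span F ((fun i : Fin k => X ^ (i : ℕ)) '' {i | i ∉ range h})

/-- The span of the twisted monomials `x ^ h_j + η_j x ^ (k - 1 + t_j)`; its image under `ev α v`
is the summand `C₁` of a twisted code. -/
noncomputable def twistedSpan {κ : Type*} (t : κ → ℕ) (h : κ → Fin k) (η : κ → F) :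
    Submodule F F[X] :=
  span F (range fun j => X ^ (h j : ℕ) + C (η j) * X ^ (k - 1 + t j))

section Span

variable {κ : Type*} {h : κ → Fin k} {t : κ → ℕ} {η : κ → F}

lemma untwistedSpan_le_degreeLT : untwistedSpan F h ≤ degreeLT F k := by
  rw [untwistedSpan, span_le]
  rintro _ ⟨i, -, rfl⟩
  exact X_pow_mem_degreeLT i.isLt

lemma twistedSpan_le_degreeLT {n : ℕ} (hkn : k ≤ n) (ht : ∀ j, t j ≤ n - k) :
    twistedSpan t h η ≤ degreeLT F n := by
  rw [twistedSpan, span_le]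
  rintro _ ⟨j, rfl⟩
  have hj := (h j).isLt
  have htj := ht j
  refine add_mem (X_pow_mem_degreeLT (by omega)) ?_
  rw [← smul_eq_C_mul]
  exact smul_mem _ _ (X_pow_mem_degreeLT (by omega))

lemma finrank_untwistedSpan_add_card [Fintype κ] (hh : Function.Injective h) :
    finrank F (untwistedSpan F h) + Fintype.card κ = k := by
  classical
  have hind : LinearIndependent F fun i : ↥{i | i ∉ range h} => (X ^ (i : ℕ) : F[X]) :=
    linearIndependent_X_pow.comp _ (Fin.val_injective.comp Subtype.val_injective)
  rw [untwistedSpan, image_eq_range, finrank_span_eq_card hind, ← Nat.card_eq_fintype_card,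
    Nat.card_coe_set_eq, ← Nat.card_eq_fintype_card, ← ncard_range_of_injective hh, add_comm]
  exact (ncard_add_ncard_compl (range h)).trans (Nat.card_fin k)

lemma finrank_twistedSpan [Fintype κ] (ht : Function.Injective t) (ht1 : ∀ j, 1 ≤ t j)
    (hη : ∀ j, η j ≠ 0) : finrank F (twistedSpan t h η) = Fintype.card κ :=
  finrank_span_eq_card <| .of_comp _ <| linearIndependent_coeffsAt_add_C_mul_X_pow
    (fun j => X_pow_mem_degreeLT (h j).isLt) ((add_right_injective _).comp ht)
    (fun j => by have := ht1 j; omega) hη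

lemma disjoint_twistedSpan_degreeLT (ht : Function.Injective t) (ht1 : ∀ j, 1 ≤ t j)
    (hη : ∀ j, η j ≠ 0) : Disjoint (twistedSpan t h η) (degreeLT F k) :=
  disjoint_span_add_C_mul_X_pow_degreeLT (fun j => X_pow_mem_degreeLT (h j).isLt)
    ((add_right_injective _).comp ht) (fun j => by have := ht1 j; omega) hη

end Span

section TwistedMap

variable {ℓ : ℕ} {t : Fin ℓ → ℕ} {h : Fin ℓ → Fin k} {η : Fin ℓ → F}

lemma twistedMap_single_of_notMem_range {i : Fin k} (hi : i ∉ range h) :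
    twistedMap k t h η (Pi.single i 1) = X ^ (i : ℕ) := by
  have hne : ∀ j, h j ≠ i := fun j hj => hi ⟨j, hj⟩
  simp [twistedMap, LinearMap.sum_apply, Pi.single_apply, hne, apply_ite, X_pow_eq_monomial]

lemma twistedMap_single_apply (hh : Function.Injective h) (j : Fin ℓ) :
    twistedMap k t h η (Pi.single (h j) 1) = X ^ (h j : ℕ) + C (η j) * X ^ (k - 1 + t j) := by
  simp [twistedMap, LinearMap.sum_apply, Pi.single_apply, hh.eq_iff, apply_ite,
    X_pow_eq_monomial, C_mul_monomial]

lemma range_twistedMap (hh : Function.Injective h) :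
    LinearMap.range (twistedMap k t h η) = untwistedSpan F h ⊔ twistedSpan t h η := by
  let T := twistedMap k t h η
  let e := Pi.basisFun F (Fin k)
  have huntwisted : T ∘ e '' (range h)ᶜ = (fun i : Fin k => X ^ (i : ℕ)) '' {i | i ∉ range h} :=
    image_congr fun i hi => by
      rw [Function.comp_apply, Pi.basisFun_apply, twistedMap_single_of_notMem_range hi]
  have htwisted : T ∘ e '' range h =
      range fun j => X ^ (h j : ℕ) + C (η j) * X ^ (k - 1 + t j) := by
    rw [← range_comp]
    exact congrArg range <| funext fun j => by
      rw [Function.comp_apply, Function.comp_apply, Pi.basisFun_apply, twistedMap_single_apply hh]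
  calc LinearMap.range T
      = span F (T ∘ e '' ((range h)ᶜ ∪ range h)) := by
        rw [compl_union_self, image_univ, range_comp, ← map_span, e.span_eq,
          LinearMap.range_eq_map]
    _ = untwistedSpan F h ⊔ twistedSpan t h η := by
        rw [image_union, span_union, huntwisted, htwisted, untwistedSpan, twistedSpan]

end TwistedMap

end Twisted

lemma ev_injOn_degreeLT {F ι : Type*} [Field F] [Fintype ι] {α v : ι → F}
    (hα : Function.Injective α) (hv : ∀ i, v i ≠ 0) :
    InjOn (ev α v) (degreeLT F (Fintype.card ι)) := by
  intro p hp q hq hpq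
  exact eq_of_degrees_lt_of_eval_index_eq Finset.univ hα.injOn (mem_degreeLT.1 hp)
    (mem_degreeLT.1 hq) fun i _ => mul_left_cancel₀ (hv i) (congrFun hpq i)

theorem stmt5_general {F ι : Type*} [Field F] [Fintype ι] {k ℓ : ℕ}
    (hk : k ≤ Fintype.card ι) (α v : ι → F) (hα : Function.Injective α) (hv : ∀ i, v i ≠ 0)
    (h : Fin ℓ → Fin k) (hh : Function.Injective h)
    (t : Fin ℓ → ℕ) (ht : Function.Injective t)
    (ht1 : ∀ j, 1 ≤ t j) (ht2 : ∀ j, t j ≤ Fintype.card ι - k)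
    (η : Fin ℓ → F) (hη : ∀ j, η j ≠ 0) :
    let C := (LinearMap.range (twistedMap k t h η)).map (ev α v)
    let C0 := (untwistedSpan F h).map (ev α v)
    let C1 := (twistedSpan t h η).map (ev α v)
    C = C0 ⊔ C1 ∧ C0 ⊓ C1 = ⊥ ∧
      C0 ≤ GRS k α v ∧
      finrank F C0 + ℓ = finrank F (GRS k α v) ∧
      finrank F C1 = ℓ ∧
      C1 ⊓ GRS k α v = ⊥ := by
  intro C C0 C1
  have hev := ev_injOn_degreeLT hα hv
  have hlow := degreeLT_mono (R := F) hk
  have hC0 : C0 ≤ GRS k α v := map_mono untwistedSpan_le_degreeLT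
  have htw : twistedSpan t h η ≤ degreeLT F (Fintype.card ι) := twistedSpan_le_degreeLT hk ht2
  have hC1 : Disjoint C1 (GRS k α v) :=
    disjoint_map_of_injOn hev htw hlow (disjoint_twistedSpan_degreeLT ht ht1 hη)
  refine ⟨?_, (hC1.mono_right hC0).symm.eq_bot, hC0, ?_, ?_, hC1.eq_bot⟩
  · rw [← Submodule.map_sup, ← range_twistedMap hh]
  · rw [finrank_map_eq_of_injOn (hev.mono (untwistedSpan_le_degreeLT.trans hlow)), GRS,
      finrank_map_eq_of_injOn (hev.mono hlow), finrank_degreeLT]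
    simpa using finrank_untwistedSpan_add_card hh
  · rw [finrank_map_eq_of_injOn (hev.mono htw), finrank_twistedSpan ht ht1 hη, Fintype.card_fin]

/-- A TGRS code with `ℓ` twists is an `ℓ`-qGRS code: it decomposes as `C₀ ⊕ C₁` where
`C₀ = ev(span{x^i : i < k, i ∉ h})` has codimension `ℓ` in `GRS_k(α,v)` and
`C₁ = ev(span{x^{h_j} + η_j x^{k−1+t_j}})` has dimension `ℓ` and meets `GRS_k(α,v)`
trivially. -/
theorem stmt5 {F : Type*} [Field F] [Fintype F] {n k ℓ : ℕ}
    (hℓk : ℓ ≤ k) (hkn : k ≤ n) (hnq : n ≤ Fintype.card F)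
    (α v : Fin n → F) (hα : Function.Injective α) (hv : ∀ i, v i ≠ 0)
    (h : Fin ℓ → Fin k) (hh : Function.Injective h)
    (t : Fin ℓ → ℕ) (ht : Function.Injective t)
    (ht1 : ∀ j, 1 ≤ t j) (ht2 : ∀ j, t j ≤ n - k)
    (η : Fin ℓ → F) (hη : ∀ j, η j ≠ 0) :
    let C : Submodule F (Fin n → F) := (LinearMap.range (twistedMap k t h η)).map (ev α v)
    let C0 : Submodule F (Fin n → F) :=
      (Submodule.span F ((fun i : Fin k => (Polynomial.X : Polynomial F) ^ (i : ℕ)) ''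
        {i | i ∉ Set.range h})).map (ev α v)
    let C1 : Submodule F (Fin n → F) :=
      (Submodule.span F (Set.range fun j : Fin ℓ =>
        (Polynomial.X : Polynomial F) ^ ((h j : ℕ)) +
          Polynomial.C (η j) * Polynomial.X ^ (k - 1 + t j))).map (ev α v)
    C = C0 ⊔ C1 ∧ C0 ⊓ C1 = ⊥ ∧
      C0 ≤ GRS k α v ∧
      Module.finrank F C0 + ℓ = Module.finrank F (GRS k α v) ∧
      Module.finrank F C1 = ℓ ∧
      C1 ⊓ GRS k α v = ⊥ :=
  stmt5_general (by rwa [Fintype.card_fin]) α v hα hv h hh t ht ht1 (by rwa [Fintype.card_fin]) η hη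
end

section
/- Let C ⊆ F_q^n be an ℓ-qGRS code with respect to α, v and dimension parameter k, and suppose ℓ ≤ n − k. Then the dual code C^⊥ (with respect to the standard bilinear form ⟨x, y⟩ = Σ_i x_i y_i) decomposes as C^⊥ = C_0′ ⊕ C_1′, where C_0′ = GRS_k(α, v)^⊥ ∩ C_1^⊥ is a subspace of codimension ℓ of GRS_k(α, v)^⊥, and C_1′ is a subspace of dimension ℓ with C_1′ ∩ GRS_k(α, v)^⊥ = 0. (Since GRS_k(α, v)^⊥ is itself a GRS code of dimension n − k with the same evaluation points α, this makes C^⊥ an ℓ-qGRS code.) -/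
open Polynomial

/-- The dual code of `C ⊆ F^n` with respect to the standard bilinear form
`⟨x, y⟩ = Σ_i x_i y_i`. -/
def dualCode {F : Type*} [Field F] {n : ℕ} (C : Submodule F (Fin n → F)) :
    Submodule F (Fin n → F) where
  carrier := {x | ∀ c ∈ C, ∑ i, x i * c i = 0}
  add_mem' := by
    intro a b ha hb c hc
    simp only [Set.mem_setOf_eq] at ha hb ⊢
    simp [Pi.add_apply, add_mul, Finset.sum_add_distrib, ha c hc, hb c hc]
  zero_mem' := by intro c hc; simp
  smul_mem' := by
    intro r x hx c hc
    simp only [Set.mem_setOf_eq] at hx ⊢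
    simp [Pi.smul_apply, smul_eq_mul, mul_assoc, ← Finset.mul_sum, hx c hc]

/-!
Let `ᗮ` be taken with respect to a nondegenerate form on a finite-dimensional space; in the
application `G` is the GRS code. Since `C₀ ≤ G`, we have
`(C₀ ⊔ C₁)ᗮ ⊓ Gᗮ = (G ⊔ C₁)ᗮ = Gᗮ ⊓ C₁ᗮ`, and because `dim (G ⊕ C₁) = dim G + ℓ` this subspace has
codimension `ℓ` in `Gᗮ`. As `dim (C₀ ⊕ C₁) = dim G`, it also has codimension `ℓ` in `(C₀ ⊔ C₁)ᗮ`,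
and any complement of it there meets `Gᗮ` trivially.
-/

open Module
open LinearMap (BilinForm)

theorem exists_disjoint_inf_sup_eq {L : Type*} [Lattice L] [BoundedOrder L] [IsModularLattice L]
    [ComplementedLattice L] (a b : L) : ∃ c, Disjoint c b ∧ a ⊓ b ⊔ c = a := by
  obtain ⟨c, hdisj, hsup⟩ :=
    IsModularLattice.exists_disjoint_and_sup_eq (inf_le_left : a ⊓ b ≤ a)
  have hca : c ≤ a := hsup ▸ le_sup_right
  refine ⟨c, disjoint_iff_inf_le.2 ?_, hsup⟩
  calc c ⊓ b ≤ a ⊓ b ⊓ c := le_inf (inf_le_inf_right b hca) inf_le_left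
    _ ≤ ⊥ := hdisj.le_bot

theorem orthogonal_sup {R M : Type*} [CommSemiring R] [AddCommMonoid M] [Module R M]
    (B : BilinForm R M) (N L : Submodule R M) :
    B.orthogonal (N ⊔ L) = B.orthogonal N ⊓ B.orthogonal L := by
  refine le_antisymm
    (le_inf (BilinForm.orthogonal_le le_sup_left) (BilinForm.orthogonal_le le_sup_right)) ?_
  rintro x ⟨hN, hL⟩ y hy
  obtain ⟨a, ha, b, hb, rfl⟩ := Submodule.mem_sup.1 hy
  change B (a + b) x = 0
  rw [BilinForm.add_left, hN a ha, hL b hb, add_zero]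

theorem orthogonal_sup_inf_orthogonal_of_le {R M : Type*} [CommSemiring R] [AddCommMonoid M]
    [Module R M] (B : BilinForm R M) {N G : Submodule R M} (h : N ≤ G) (L : Submodule R M) :
    B.orthogonal (N ⊔ L) ⊓ B.orthogonal G = B.orthogonal G ⊓ B.orthogonal L := by
  rw [← orthogonal_sup, ← orthogonal_sup, sup_right_comm, sup_eq_right.2 h]

theorem finrank_sup_of_disjoint {K V : Type*} [DivisionRing K] [AddCommGroup V] [Module K V]
    {U W : Submodule K V} [FiniteDimensional K U] [FiniteDimensional K W] (h : Disjoint U W) :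
    finrank K ↥(U ⊔ W) = finrank K U + finrank K W := by
  rw [← Submodule.finrank_sup_add_finrank_inf_eq, h.eq_bot, finrank_bot, add_zero]

section Nondegenerate

variable {K V : Type*} [Field K] [AddCommGroup V] [Module K V] [FiniteDimensional K V]
  {B : BilinForm K V}

theorem finrank_orthogonal_inf_orthogonal_add_finrank (hB : B.Nondegenerate)
    {U W : Submodule K V} (h : Disjoint U W) :
    finrank K ↥(B.orthogonal U ⊓ B.orthogonal W) + finrank K W = finrank K (B.orthogonal U) := by
  have hle : finrank K ↥(U ⊔ W) ≤ finrank K V := Submodule.finrank_le _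
  rw [← orthogonal_sup, BilinForm.finrank_orthogonal hB, BilinForm.finrank_orthogonal hB]
  rw [finrank_sup_of_disjoint h] at hle ⊢
  omega

theorem stmt6_general (hB : B.Nondegenerate) {ℓ : ℕ} {G C₀ C₁ : Submodule K V} (hC₀ : C₀ ≤ G)
    (hcodim : finrank K C₀ + ℓ = finrank K G) (hC₁ : finrank K C₁ = ℓ) (hdisj : Disjoint C₁ G) :
    finrank K ↥(B.orthogonal G ⊓ B.orthogonal C₁) + ℓ = finrank K (B.orthogonal G) ∧
    ∃ C₁' : Submodule K V,
      B.orthogonal (C₀ ⊔ C₁) = (B.orthogonal G ⊓ B.orthogonal C₁) ⊔ C₁' ∧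
      Disjoint (B.orthogonal G ⊓ B.orthogonal C₁) C₁' ∧
      finrank K C₁' = ℓ ∧
      Disjoint C₁' (B.orthogonal G) := by
  have hcodim' : finrank K ↥(B.orthogonal G ⊓ B.orthogonal C₁) + ℓ = finrank K (B.orthogonal G) :=
    hC₁ ▸ finrank_orthogonal_inf_orthogonal_add_finrank hB hdisj.symm
  have hdim : finrank K (B.orthogonal (C₀ ⊔ C₁)) = finrank K (B.orthogonal G) := by
    rw [BilinForm.finrank_orthogonal hB, BilinForm.finrank_orthogonal hB,
      finrank_sup_of_disjoint (hdisj.symm.mono_left hC₀), hC₁, hcodim]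
  obtain ⟨C₁', hC₁', hsup⟩ :=
    exists_disjoint_inf_sup_eq (B.orthogonal (C₀ ⊔ C₁)) (B.orthogonal G)
  rw [orthogonal_sup_inf_orthogonal_of_le B hC₀] at hsup
  have hdisj' : Disjoint (B.orthogonal G ⊓ B.orthogonal C₁) C₁' :=
    hC₁'.symm.mono_left inf_le_left
  have hfinrank : finrank K C₁' = ℓ := by
    have hadd := finrank_sup_of_disjoint hdisj'
    rw [hsup] at hadd
    omega
  exact ⟨hcodim', C₁', hsup.symm, hdisj', hfinrank, hC₁'⟩

end Nondegenerate

theorem nondegenerate_dotProductBilin (R : Type*) [CommSemiring R] (ι : Type*) [Fintype ι] :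
    (dotProductBilin R R : BilinForm R (ι → R)).Nondegenerate :=
  ⟨dotProduct_eq_zero, fun x hx => dotProduct_eq_zero x fun y => (dotProduct_comm x y).trans (hx y)⟩

theorem dualCode_eq_orthogonal {F : Type*} [Field F] {n : ℕ} (C : Submodule F (Fin n → F)) :
    dualCode C = BilinForm.orthogonal (dotProductBilin F F) C := by
  ext x
  exact forall₂_congr fun c _ => by rw [dotProductBilin_apply_apply, dotProduct_comm]; rfl

/-- The dual of an `ℓ`-qGRS code `C = C₀ ⊕ C₁` decomposes as
`C^⊥ = C₀′ ⊕ C₁′` where `C₀′ = GRS_k(α,v)^⊥ ∩ C₁^⊥` has codimension `ℓ` in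
`GRS_k(α,v)^⊥` and `C₁′` has dimension `ℓ` and meets `GRS_k(α,v)^⊥` trivially. -/
theorem stmt6 {F : Type*} [Field F] [Fintype F] {n k ℓ : ℕ}
    (hkn : k ≤ n) (hℓ : ℓ ≤ n - k)
    (α v : Fin n → F) (hα : Function.Injective α) (hv : ∀ i, v i ≠ 0)
    (C C0 C1 : Submodule F (Fin n → F))
    (hC : C = C0 ⊔ C1) (hdisj : C0 ⊓ C1 = ⊥)
    (hC0le : C0 ≤ GRS k α v)
    (hcodim : Module.finrank F C0 + ℓ = Module.finrank F (GRS k α v))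
    (hC1 : Module.finrank F C1 = ℓ) (hC1int : C1 ⊓ GRS k α v = ⊥) :
    (dualCode (GRS k α v) ⊓ dualCode C1) ≤ dualCode (GRS k α v) ∧
    Module.finrank F ↥(dualCode (GRS k α v) ⊓ dualCode C1) + ℓ =
      Module.finrank F (dualCode (GRS k α v)) ∧
    ∃ C1' : Submodule F (Fin n → F),
      dualCode C = (dualCode (GRS k α v) ⊓ dualCode C1) ⊔ C1' ∧
      (dualCode (GRS k α v) ⊓ dualCode C1) ⊓ C1' = ⊥ ∧
      Module.finrank F C1' = ℓ ∧
      C1' ⊓ dualCode (GRS k α v) = ⊥ := by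
  rw [hC, dualCode_eq_orthogonal, dualCode_eq_orthogonal, dualCode_eq_orthogonal]
  simpa only [disjoint_iff, inf_le_left, true_and] using
    stmt6_general (nondegenerate_dotProductBilin F _) hC0le hcodim hC1 (disjoint_iff.2 hC1int)
end

section
/- Let D = GRS_k(α, v) ⊕ D_1 ⊆ F_q^n, where D_1 is a subspace of dimension ℓ with D_1 ∩ GRS_k(α, v) = 0, and let I ⊆ {1,…,n} with s := |I| < k. Then dim(D_I) = dim(D) − s = k + ℓ − s, and there exist α′, v′ ∈ F_q^{n−s} (α′ with pairwise distinct entries, v′ with all entries nonzero) and a subspace D_1′ ⊆ F_q^{n−s} of dimension ℓ such that D_I = GRS_{k−s}(α′, v′) ⊕ D_1′. -/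
open Polynomial

/-- The shortening of a code `C ⊆ F^ι` at `I`. -/
noncomputable def shorten {F : Type*} [Field F] {ι : Type*}
    (C : Submodule F (ι → F)) (I : Set ι) :
    Submodule F ({i : ι // i ∉ I} → F) :=
  ((C ⊓ LinearMap.ker (LinearMap.funLeft F F (fun i : I => (i : ι)))).map
    (LinearMap.funLeft F F (fun j : {i : ι // i ∉ I} => (j : ι))))

/-!
Write `s = |I|`. Restricting `GRS_k(α, v)` to the coordinates in `I` gives a generalized
Reed–Solomon code of length `s ≤ k`, which is all of `F^I`; so the same holds for every code
containing `GRS_k(α, v)`, and by rank–nullity shortening such a code at `I` costs exactly `s`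
dimensions. A polynomial of degree `< k` vanishing on `{α_i : i ∈ I}` is a multiple
`g · ∏_{i ∈ I} (X - α_i)` with `deg g < k - s`, so the shortening of `GRS_k(α, v)` is
`GRS_{k-s}` with the multipliers `v_j ∏_{i ∈ I} (α_j - α_i)`. It lies in `D_I`, and any complement
of it inside `D_I` serves as `D₁′`.
-/

section LinearAlgebra

variable {K V W : Type*} [AddCommGroup V] [AddCommGroup W]

theorem finrank_map_of_disjoint_ker [Ring K] [Module K V] [Module K W] {f : V →ₗ[K] W}
    {p : Submodule K V} (h : Disjoint p (LinearMap.ker f)) :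
    Module.finrank K (p.map f) = Module.finrank K p :=
  (LinearEquiv.ofBijective (f.submoduleMap p)
    ⟨LinearMap.submoduleMap_injective_of_injOn (LinearMap.disjoint_ker_iff_injOn.mp h),
      f.submoduleMap_surjective p⟩).finrank_eq.symm

variable [DivisionRing K] [Module K V] [Module K W]

theorem finrank_map_add_finrank_inf_ker (f : V →ₗ[K] W) (p : Submodule K V)
    [FiniteDimensional K p] :
    Module.finrank K (p.map f) + Module.finrank K ↥(p ⊓ LinearMap.ker f) =
      Module.finrank K p := by
  rw [← LinearMap.range_domRestrict, ← Submodule.map_comap_subtype,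
    Submodule.finrank_map_subtype_eq]
  exact (f.domRestrict p).finrank_range_add_finrank_ker

theorem finrank_sup_of_disjoint_s7 {p q : Submodule K V} [FiniteDimensional K p]
    [FiniteDimensional K q] (h : Disjoint p q) :
    Module.finrank K ↥(p ⊔ q) = Module.finrank K p + Module.finrank K q := by
  rw [← Submodule.finrank_sup_add_finrank_inf_eq, h.eq_bot, finrank_bot, add_zero]

end LinearAlgebra

section Polynomial

theorem nodal_dvd_iff {F ι : Type*} [Field F] {s : Finset ι} {α : ι → F}
    (hα : Set.InjOn α s) {f : F[X]} :
    Lagrange.nodal s α ∣ f ↔ ∀ i ∈ s, f.eval (α i) = 0 := by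
  refine ⟨fun h i hi => ?_, fun h => ?_⟩
  · exact eval_eq_zero_of_dvd_of_eval_eq_zero h (Lagrange.eval_nodal_at_node hi)
  · refine Finset.prod_dvd_of_coprime (fun i hi j hj hij => ?_) fun i hi => ?_
    · exact isCoprime_X_sub_C_of_isUnit_sub (sub_ne_zero.mpr (hα.ne hi hj hij)).isUnit
    · exact dvd_iff_isRoot.mpr (h i hi)

theorem monic_mul_mem_degreeLT_iff {R : Type*} [Semiring R] {p : R[X]} (hp : p.Monic)
    {g : R[X]} {k : ℕ} :
    p * g ∈ degreeLT R k ↔ g ∈ degreeLT R (k - p.natDegree) := by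
  rcases eq_or_ne g 0 with rfl | hg
  · simp only [mul_zero, Submodule.zero_mem]
  · rw [mem_degreeLT, mem_degreeLT, ← natDegree_lt_iff_degree_lt (hp.mul_right_ne_zero hg),
      ← natDegree_lt_iff_degree_lt hg, hp.natDegree_mul' hg]
    omega

end Polynomial

section GRS

variable {F ι κ : Type*} [Field F] {k : ℕ} {α v : ι → F}

theorem ev_apply (α v : ι → F) (f : F[X]) (i : ι) : ev α v f i = v i * f.eval (α i) :=
  rfl

theorem GRS_mono {m : ℕ} (h : m ≤ k) : GRS m α v ≤ GRS k α v :=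
  Submodule.map_mono (degreeLT_mono h)

theorem map_funLeft_GRS (k : ℕ) (α v : ι → F) (g : κ → ι) :
    (GRS k α v).map (LinearMap.funLeft F F g) = GRS k (α ∘ g) (v ∘ g) :=
  (Submodule.map_comp _ _ _).symm

variable [Fintype ι]

theorem disjoint_degreeLT_ker_ev (hα : Function.Injective α) (hv : ∀ i, v i ≠ 0)
    (hk : k ≤ Fintype.card ι) : Disjoint (degreeLT F k) (LinearMap.ker (ev α v)) := by
  refine LinearMap.disjoint_ker.mpr fun f hf hev => ?_
  have hdeg : f.degree < (Finset.univ : Finset ι).card :=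
    (mem_degreeLT.mp hf).trans_le (Nat.cast_le.mpr hk)
  refine eq_zero_of_degree_lt_of_eval_index_eq_zero _ hα.injOn hdeg fun i _ => ?_
  exact (mul_eq_zero.mp (congrFun hev i)).resolve_left (hv i)

theorem finrank_GRS (hα : Function.Injective α) (hv : ∀ i, v i ≠ 0)
    (hk : k ≤ Fintype.card ι) : Module.finrank F (GRS k α v) = k := by
  have hdisj := disjoint_degreeLT_ker_ev hα hv hk
  rw [GRS, finrank_map_of_disjoint_ker hdisj, (degreeLTEquiv F k).finrank_eq,
    Module.finrank_fin_fun]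

theorem GRS_eq_top (hα : Function.Injective α) (hv : ∀ i, v i ≠ 0)
    (hk : Fintype.card ι ≤ k) : GRS k α v = ⊤ := by
  have htop : GRS (Fintype.card ι) α v = ⊤ := Submodule.eq_top_of_finrank_eq <| by
    rw [finrank_GRS hα hv le_rfl, Module.finrank_fintype_fun_eq_card]
  exact top_le_iff.mp (htop.ge.trans (GRS_mono hk))

end GRS

section Shortening

variable {F ι : Type*} [Field F]

theorem mem_shorten {C : Submodule F (ι → F)} {I : Set ι} {x : {i : ι // i ∉ I} → F} :
    x ∈ shorten C I ↔ ∃ c ∈ C, (∀ i ∈ I, c i = 0) ∧ (fun j : {i : ι // i ∉ I} => c j) = x := by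
  simp only [shorten, Submodule.mem_map, Submodule.mem_inf, LinearMap.mem_ker, funext_iff,
    LinearMap.funLeft_apply, Pi.zero_apply, Subtype.forall, and_assoc]

theorem shorten_mono {C D : Submodule F (ι → F)} (h : C ≤ D) (I : Set ι) :
    shorten C I ≤ shorten D I :=
  Submodule.map_mono (inf_le_inf_right _ h)

theorem disjoint_ker_funLeft_compl (I : Set ι) :
    Disjoint (LinearMap.ker (LinearMap.funLeft F F ((↑) : I → ι)))
      (LinearMap.ker (LinearMap.funLeft F F ((↑) : {i : ι // i ∉ I} → ι))) := by
  refine LinearMap.disjoint_ker.mpr fun x hxI hxIc => funext fun i => ?_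
  by_cases hi : i ∈ I
  · exact congrFun hxI ⟨i, hi⟩
  · exact congrFun hxIc ⟨i, hi⟩

theorem finrank_map_funLeft_add_finrank_shorten (C : Submodule F (ι → F))
    [FiniteDimensional F C] (I : Set ι) :
    Module.finrank F (C.map (LinearMap.funLeft F F ((↑) : I → ι))) +
      Module.finrank F (shorten C I) = Module.finrank F C := by
  rw [shorten, finrank_map_of_disjoint_ker ((disjoint_ker_funLeft_compl I).mono_left inf_le_right)]
  exact finrank_map_add_finrank_inf_ker _ C

theorem card_add_finrank_shorten_of_GRS_le {k : ℕ} {α v : ι → F} {I : Finset ι}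
    (hα : Set.InjOn α I) (hv : ∀ i ∈ I, v i ≠ 0) (hI : I.card ≤ k)
    {C : Submodule F (ι → F)} [FiniteDimensional F C] (hC : GRS k α v ≤ C) :
    I.card + Module.finrank F (shorten C (I : Set ι)) = Module.finrank F C := by
  have hGRS : (GRS k α v).map (LinearMap.funLeft F F ((↑) : ↥(I : Set ι) → ι)) = ⊤ := by
    rw [map_funLeft_GRS]
    exact GRS_eq_top hα.injective (fun i => hv i i.2) (by simpa using hI)
  have hmap : C.map (LinearMap.funLeft F F ((↑) : ↥(I : Set ι) → ι)) = ⊤ :=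
    top_le_iff.mp (hGRS.ge.trans (Submodule.map_mono hC))
  rw [← finrank_map_funLeft_add_finrank_shorten C (I : Set ι), hmap, finrank_top,
    Module.finrank_fintype_fun_eq_card]
  simp only [SetLike.mem_coe, Fintype.card_coe]

theorem shorten_GRS {α v : ι → F} {I : Finset ι} (hα : Set.InjOn α I)
    (hv : ∀ i ∈ I, v i ≠ 0) (k : ℕ) :
    shorten (GRS k α v) (I : Set ι) =
      GRS (k - I.card) (fun j : {i : ι // i ∉ (I : Set ι)} => α j)
        (fun j => v j * (Lagrange.nodal I α).eval (α j)) := by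
  have mul_nodal_mem (g : F[X]) :
      Lagrange.nodal I α * g ∈ degreeLT F k ↔ g ∈ degreeLT F (k - I.card) := by
    rw [monic_mul_mem_degreeLT_iff Lagrange.nodal_monic, Lagrange.natDegree_nodal]
  have ev_mul_nodal (g : F[X]) (i : ι) :
      ev α v (Lagrange.nodal I α * g) i =
        v i * (Lagrange.nodal I α).eval (α i) * g.eval (α i) := by
    rw [ev_apply, eval_mul, mul_assoc]
  ext x
  rw [mem_shorten]
  constructor
  · rintro ⟨_, ⟨f, hf, rfl⟩, hzero, rfl⟩
    obtain ⟨g, rfl⟩ := (nodal_dvd_iff hα).mpr fun i hi =>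
      (mul_eq_zero.mp (hzero i hi)).resolve_left (hv i hi)
    exact ⟨g, (mul_nodal_mem g).mp hf, funext fun j => (ev_mul_nodal g j).symm⟩
  · rintro ⟨g, hg, rfl⟩
    refine ⟨_, ⟨_, (mul_nodal_mem g).mpr hg, rfl⟩, fun i hi => ?_, funext fun j => ev_mul_nodal g j⟩
    rw [ev_mul_nodal, Lagrange.eval_nodal_at_node hi, mul_zero, zero_mul]

end Shortening

theorem stmt7_general {F ι : Type*} [Field F] [Fintype ι] {k ℓ : ℕ} (hk : k ≤ Fintype.card ι)
    (α v : ι → F) (hα : Function.Injective α) (hv : ∀ i, v i ≠ 0)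
    (D1 : Submodule F (ι → F)) (hD1 : Module.finrank F D1 = ℓ)
    (hdisj : GRS k α v ⊓ D1 = ⊥) (I : Finset ι) (hs : I.card < k) :
    Module.finrank F (shorten (GRS k α v ⊔ D1) (I : Set ι)) =
      Module.finrank F ↥(GRS k α v ⊔ D1) - I.card ∧
    Module.finrank F (shorten (GRS k α v ⊔ D1) (I : Set ι)) = k + ℓ - I.card ∧
    ∃ (α' v' : {i : ι // i ∉ (I : Set ι)} → F)
      (D1' : Submodule F ({i : ι // i ∉ (I : Set ι)} → F)),
      Function.Injective α' ∧ (∀ j, v' j ≠ 0) ∧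
      Module.finrank F D1' = ℓ ∧
      shorten (GRS k α v ⊔ D1) (I : Set ι) = GRS (k - I.card) α' v' ⊔ D1' ∧
      GRS (k - I.card) α' v' ⊓ D1' = ⊥ := by
  have hG : Module.finrank F (GRS k α v) = k := finrank_GRS hα hv hk
  have hD : Module.finrank F ↥(GRS k α v ⊔ D1) = k + ℓ := by
    rw [finrank_sup_of_disjoint_s7 (disjoint_iff.mpr hdisj), hG, hD1]
  have hGI := card_add_finrank_shorten_of_GRS_le (hα.injOn (s := I)) (fun i _ => hv i) hs.le
    (le_refl (GRS k α v))
  have hDI := card_add_finrank_shorten_of_GRS_le (hα.injOn (s := I)) (fun i _ => hv i) hs.le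
    (le_sup_left : GRS k α v ≤ GRS k α v ⊔ D1)
  obtain ⟨D1', hdisj', hsup⟩ := IsModularLattice.exists_disjoint_and_sup_eq
    (shorten_mono (le_sup_left : GRS k α v ≤ GRS k α v ⊔ D1) (I : Set ι))
  have hdim : Module.finrank F D1' = ℓ := by
    have hadd := finrank_sup_of_disjoint_s7 hdisj'
    rw [hsup] at hadd
    omega
  have hnodal (j : {i : ι // i ∉ (I : Set ι)}) : (Lagrange.nodal I α).eval (α j) ≠ 0 :=
    Lagrange.eval_nodal_not_at_node fun i hi h => j.2 (hα h ▸ hi)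
  rw [shorten_GRS hα.injOn (fun i _ => hv i)] at hsup hdisj'
  exact ⟨by omega, by omega, _, _, D1', hα.comp Subtype.val_injective,
    fun j => mul_ne_zero (hv j) (hnodal j), hdim, hsup.symm, hdisj'.eq_bot⟩

/-- If `D = GRS_k(α, v) ⊕ D₁` with `dim D₁ = ℓ` and `I` has `s = |I| < k` elements, then
`dim D_I = dim D − s = k + ℓ − s` and `D_I = GRS_{k−s}(α′, v′) ⊕ D₁′` for suitable
`α′` (pairwise distinct entries), `v′` (nonzero entries) and `D₁′` of dimension `ℓ`. -/
theorem stmt7 {F : Type*} [Field F] [Fintype F] {n k ℓ : ℕ} (hkn : k ≤ n)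
    (α v : Fin n → F) (hα : Function.Injective α) (hv : ∀ i, v i ≠ 0)
    (D1 : Submodule F (Fin n → F)) (hD1 : Module.finrank F D1 = ℓ)
    (hdisj : GRS k α v ⊓ D1 = ⊥)
    (I : Finset (Fin n)) (hs : I.card < k) :
    Module.finrank F (shorten (GRS k α v ⊔ D1) (I : Set (Fin n))) =
      Module.finrank F ↥(GRS k α v ⊔ D1) - I.card ∧
    Module.finrank F (shorten (GRS k α v ⊔ D1) (I : Set (Fin n))) = k + ℓ - I.card ∧
    ∃ (α' v' : {i : Fin n // i ∉ (I : Set (Fin n))} → F)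
      (D1' : Submodule F ({i : Fin n // i ∉ (I : Set (Fin n))} → F)),
      Function.Injective α' ∧ (∀ j, v' j ≠ 0) ∧
      Module.finrank F D1' = ℓ ∧
      shorten (GRS k α v ⊔ D1) (I : Set (Fin n)) = GRS (k - I.card) α' v' ⊔ D1' ∧
      GRS (k - I.card) α' v' ⊓ D1' = ⊥ :=
  stmt7_general (by simpa using hkn) α v hα hv D1 hD1 hdisj I hs
end

section
/- Let ℓ ≤ k ≤ d and let C = ev_{α,v}(P) ⊆ F_q^n, where P = P_0 ⊕ P_1 ⊆ F_q[x], P_0 is a subspace of codimension ℓ of F_q[x]_{<k}, P_1 is a subspace of dimension ℓ with P_1 ∩ F_q[x]_{<k} = 0, and every element of P has degree ≤ d. Then dim(C ⋆ C) ≤ min{ (ℓ+2)k − 1 − ℓ(ℓ−1)/2, k + d + ℓ(ℓ+1)/2, 2d + 1 }. -/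
open Polynomial

/-!
Evaluation is multiplicative, so `C ⋆ C` is the image of `P * P` under evaluation with the twist
`v * v`, and it suffices to bound `dim (P * P)`. By commutativity `P * P = P₀ * P + P₁ * P₁`, where
`P₁ * P₁` is spanned by the products of unordered pairs of basis vectors and hence has dimension at
most `ℓ(ℓ+1)/2`. For `P₀ * P` there are two estimates: its elements have degree less than `k + d`,
and it is the sum of `P₀ * P₀`, whose elements have degree less than `2k - 1`, and `P₀ * P₁`, of
dimension at most `(k - ℓ)ℓ`. The bound `2d + 1` only uses the degrees in `P * P`.
-/

section Algebra

instance finite_submodule_mul {R A : Type*} [CommSemiring R] [Semiring A] [Algebra R A]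
    (M N : Submodule R A) [Module.Finite R M] [Module.Finite R N] :
    Module.Finite R (M * N : Submodule R A) :=
  Module.Finite.iff_fg.2 <| (Module.Finite.iff_fg.1 ‹_›).mul (Module.Finite.iff_fg.1 ‹_›)

theorem sup_mul_sup_self {R A : Type*} [CommSemiring R] [CommSemiring A] [Algebra R A]
    (M N : Submodule R A) : (M ⊔ N) * (M ⊔ N) = M * (M ⊔ N) ⊔ N * N := by
  have hNM : N * M ≤ M * (M ⊔ N) := mul_comm N M ▸ mul_le_mul' le_rfl le_sup_right
  rw [Submodule.sup_mul, Submodule.mul_sup N, ← sup_assoc, sup_eq_left.2 hNM]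

variable {K A : Type*} [Field K]

theorem finrank_mul_le_mul_finrank [Ring A] [Algebra K A] (M N : Submodule K A)
    [Module.Finite K M] [Module.Finite K N] :
    Module.finrank K (M * N : Submodule K A) ≤ Module.finrank K M * Module.finrank K N := by
  rw [← Submodule.mulMap_range, ← Module.finrank_tensorProduct]
  exact LinearMap.finrank_range_le _

theorem finrank_mul_sup_le [Ring A] [Algebra K A] (M N : Submodule K A)
    [Module.Finite K M] [Module.Finite K N] :
    Module.finrank K (M * (M ⊔ N) : Submodule K A) ≤
      Module.finrank K (M * M : Submodule K A) + Module.finrank K M * Module.finrank K N := by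
  rw [Submodule.mul_sup]
  exact (Submodule.finrank_add_le_finrank_add_finrank _ _).trans
    (Nat.add_le_add_left (finrank_mul_le_mul_finrank M N) _)

variable [CommRing A] [Algebra K A]

theorem finrank_span_mul_span_self_le_choose {ι : Type*} [Fintype ι] (b : ι → A) :
    Module.finrank K
        (Submodule.span K (Set.range b) * Submodule.span K (Set.range b) : Submodule K A) ≤
      (Fintype.card ι + 1).choose 2 := by
  classical
  have hspan : Submodule.span K (Set.range b) * Submodule.span K (Set.range b) =
      Submodule.span K (Set.range fun z : Sym2 ι ↦ (z.map b).mul) := by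
    rw [Submodule.span_mul_span]
    congr 1
    ext x
    simp only [Set.mem_mul, Set.mem_range, exists_exists_eq_and, Sym2.exists, Sym2.map_mk,
      Sym2.mul_mk]
  rw [hspan, ← Sym2.card]
  exact finrank_range_le_card _

theorem finrank_mul_self_le_choose (M : Submodule K A) [Module.Finite K M] :
    Module.finrank K (M * M : Submodule K A) ≤ (Module.finrank K M + 1).choose 2 := by
  let b := Module.finBasis K M
  have hM : Submodule.span K (Set.range (M.subtype ∘ b)) = M := by
    rw [Set.range_comp, ← Submodule.map_span, b.span_eq, Submodule.map_subtype_top]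
  have hb := finrank_span_mul_span_self_le_choose (K := K) (M.subtype ∘ b)
  rwa [hM, Fintype.card_fin] at hb

theorem finrank_sup_mul_sup_self_le (M N : Submodule K A)
    [Module.Finite K M] [Module.Finite K N] :
    Module.finrank K ((M ⊔ N) * (M ⊔ N) : Submodule K A) ≤
      Module.finrank K (M * (M ⊔ N) : Submodule K A) + (Module.finrank K N + 1).choose 2 := by
  rw [sup_mul_sup_self]
  exact (Submodule.finrank_add_le_finrank_add_finrank _ _).trans
    (Nat.add_le_add_left (finrank_mul_self_le_choose N) _)

end Algebra

section DegreeLT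

theorem degreeLT_mul_degreeLT_le (R : Type*) [CommSemiring R] (m n : ℕ) :
    degreeLT R m * degreeLT R n ≤ degreeLT R (m + n - 1) := by
  refine Submodule.mul_le.2 fun f hf g hg ↦ ?_
  rcases eq_or_ne f 0 with rfl | hf0
  · simp only [zero_mul, zero_mem]
  rcases eq_or_ne g 0 with rfl | hg0
  · simp only [mul_zero, zero_mem]
  have hfm : f.natDegree < m := (natDegree_lt_iff_degree_lt hf0).2 (mem_degreeLT.1 hf)
  have hgn : g.natDegree < n := (natDegree_lt_iff_degree_lt hg0).2 (mem_degreeLT.1 hg)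
  have hfg : (f * g).natDegree < m + n - 1 := natDegree_mul_le.trans_lt (by omega)
  exact mem_degreeLT.2 (degree_le_natDegree.trans_lt (by exact_mod_cast hfg))

theorem finrank_degreeLT_s9 (R : Type*) [Ring R] [StrongRankCondition R] (n : ℕ) :
    Module.finrank R (degreeLT R n) = n := by
  rw [Module.finrank_eq_card_basis (degreeLT.basis R n), Fintype.card_fin]

variable {F : Type*} [Field F] {m n : ℕ} {M N : Submodule F F[X]}

theorem finrank_mul_le_of_le_degreeLT (hM : M ≤ degreeLT F m) (hN : N ≤ degreeLT F n) :
    Module.finrank F (M * N : Submodule F F[X]) ≤ m + n - 1 :=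
  have hMN : M * N ≤ degreeLT F (m + n - 1) :=
    (mul_le_mul' hM hN).trans (degreeLT_mul_degreeLT_le F m n)
  (Submodule.finrank_mono hMN).trans_eq (finrank_degreeLT_s9 F _)

end DegreeLT

section Schur

variable {F : Type*} [Field F] {ι : Type*}

theorem ev_mul_ev (α v w : ι → F) (f g : F[X]) :
    ev α v f * ev α w g = ev α (v * w) (f * g) := by
  ext i
  simp only [ev, LinearMap.coe_mk, AddHom.coe_mk, Pi.mul_apply, eval_mul]
  ring

theorem schurProduct_map_ev (α v w : ι → F) (P Q : Submodule F F[X]) :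
    schurProduct F (P.map (ev α v)) (Q.map (ev α w)) = (P * Q).map (ev α (v * w)) := by
  rw [schurProduct_eq_mul]
  apply le_antisymm
  · rw [Submodule.mul_le]
    rintro _ ⟨f, hf, rfl⟩ _ ⟨g, hg, rfl⟩
    exact ⟨f * g, Submodule.mul_mem_mul hf hg, (ev_mul_ev α v w f g).symm⟩
  · rw [Submodule.map_le_iff_le_comap, Submodule.mul_le]
    intro f hf g hg
    rw [Submodule.mem_comap, ← ev_mul_ev]
    exact Submodule.mul_mem_mul (Submodule.mem_map_of_mem hf) (Submodule.mem_map_of_mem hg)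

theorem finrank_schurProduct_map_ev_le (α v w : ι → F) (P Q : Submodule F F[X])
    [Module.Finite F P] [Module.Finite F Q] :
    Module.finrank F (schurProduct F (P.map (ev α v)) (Q.map (ev α w))) ≤
      Module.finrank F (P * Q : Submodule F F[X]) := by
  rw [schurProduct_map_ev]
  exact Submodule.finrank_map_le _ _

end Schur

section QuasiGRS

theorem succ_choose_two_add_choose_two (n : ℕ) : (n + 1).choose 2 + n.choose 2 = n * n := by
  induction n with
  | zero => rfl
  | succ n ih =>
    have hn : (n + 1).choose 2 = n + n.choose 2 := by
      rw [Nat.choose_succ_succ', Nat.choose_one_right]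
    have hn' : (n + 2).choose 2 = n + 1 + (n + 1).choose 2 := by
      rw [Nat.choose_succ_succ', Nat.choose_one_right]
    linarith

variable {F : Type*} [Field F] {k ℓ d : ℕ} {P₀ P₁ : Submodule F F[X]} [Module.Finite F P₁]

theorem finrank_sup_mul_sup_self_le_of_codim (hP₀ : P₀ ≤ degreeLT F k)
    (hcodim : Module.finrank F P₀ + ℓ = k) (hP₁ : Module.finrank F P₁ = ℓ) :
    Module.finrank F ((P₀ ⊔ P₁) * (P₀ ⊔ P₁) : Submodule F F[X]) ≤
      (ℓ + 2) * k - 1 - ℓ.choose 2 := by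
  have : Module.Finite F P₀ := Submodule.finiteDimensional_of_le hP₀
  set m := Module.finrank F P₀
  calc
    _ ≤ Module.finrank F (P₀ * (P₀ ⊔ P₁) : Submodule F F[X]) + (ℓ + 1).choose 2 :=
      hP₁ ▸ finrank_sup_mul_sup_self_le P₀ P₁
    _ ≤ Module.finrank F (P₀ * P₀ : Submodule F F[X]) + m * ℓ + (ℓ + 1).choose 2 :=
      Nat.add_le_add_right (hP₁ ▸ finrank_mul_sup_le P₀ P₁) _
    _ ≤ (k + k - 1) + m * ℓ + (ℓ + 1).choose 2 := by
      gcongr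
      exact finrank_mul_le_of_le_degreeLT hP₀ hP₀
    _ = (ℓ + 2) * k - 1 - ℓ.choose 2 := by
      have hsq := succ_choose_two_add_choose_two ℓ
      have hexpand : (ℓ + 2) * k = ℓ * ℓ + m * ℓ + (k + k) := by rw [← hcodim]; ring
      rcases k.eq_zero_or_pos with rfl | hk
      · obtain ⟨hm, rfl⟩ : m = 0 ∧ ℓ = 0 := by omega
        simp [hm]
      · omega

theorem finrank_sup_mul_sup_self_le_of_degree (hP₀ : P₀ ≤ degreeLT F k)
    (hP₁ : Module.finrank F P₁ = ℓ) (hdeg : P₀ ⊔ P₁ ≤ degreeLT F (d + 1)) :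
    Module.finrank F ((P₀ ⊔ P₁) * (P₀ ⊔ P₁) : Submodule F F[X]) ≤
      k + d + (ℓ + 1).choose 2 := by
  have : Module.Finite F P₀ := Submodule.finiteDimensional_of_le hP₀
  calc
    _ ≤ Module.finrank F (P₀ * (P₀ ⊔ P₁) : Submodule F F[X]) + (ℓ + 1).choose 2 :=
      hP₁ ▸ finrank_sup_mul_sup_self_le P₀ P₁
    _ ≤ k + d + (ℓ + 1).choose 2 := by
      gcongr
      exact finrank_mul_le_of_le_degreeLT hP₀ hdeg

end QuasiGRS

theorem stmt9_general {F : Type*} [Field F] {ι : Type*} {k ℓ d : ℕ} (α v : ι → F)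
    {P P0 P1 : Submodule F F[X]} (hP : P = P0 ⊔ P1) (hP0le : P0 ≤ degreeLT F k)
    (hcodim : Module.finrank F P0 + ℓ = k) (hP1 : Module.finrank F P1 = ℓ)
    (hdeg : P ≤ degreeLT F (d + 1)) :
    Module.finrank F (schurProduct F (P.map (ev α v)) (P.map (ev α v))) ≤
      min (min ((ℓ + 2) * k - 1 - ℓ * (ℓ - 1) / 2) (k + d + ℓ * (ℓ + 1) / 2))
        (2 * d + 1) := by
  subst hP
  have : Module.Finite F ↥(P0 ⊔ P1) := Submodule.finiteDimensional_of_le hdeg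
  have : Module.Finite F P1 := Submodule.finiteDimensional_of_le (le_sup_right.trans hdeg)
  have hchoose : ℓ * (ℓ + 1) / 2 = (ℓ + 1).choose 2 := by
    rw [Nat.choose_two_right, Nat.add_sub_cancel, mul_comm]
  rw [← Nat.choose_two_right, hchoose]
  refine (finrank_schurProduct_map_ev_le α v v _ _).trans (le_min (le_min ?_ ?_) ?_)
  · exact finrank_sup_mul_sup_self_le_of_codim hP0le hcodim hP1
  · exact finrank_sup_mul_sup_self_le_of_degree hP0le hP1 hdeg
  · exact (finrank_mul_le_of_le_degreeLT hdeg hdeg).trans_eq (by omega)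

/-- Upper bound for the Schur square of an `ℓ`-qGRS code `C = ev_{α,v}(P)`, where
`P = P₀ ⊕ P₁` with `P₀` of codimension `ℓ` in `F[x]_{<k}`, `P₁` of dimension `ℓ`
meeting `F[x]_{<k}` trivially, and all elements of `P` of degree ≤ `d`. -/
theorem stmt9 {F : Type*} [Field F] [Fintype F] {n k ℓ d : ℕ}
    (hℓk : ℓ ≤ k) (hkd : k ≤ d)
    (α v : Fin n → F) (hα : Function.Injective α) (hv : ∀ i, v i ≠ 0)
    (P P0 P1 : Submodule F (Polynomial F))
    (hP : P = P0 ⊔ P1) (hdisj : P0 ⊓ P1 = ⊥)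
    (hP0le : P0 ≤ Polynomial.degreeLT F k)
    (hcodim : Module.finrank F P0 + ℓ = Module.finrank F (Polynomial.degreeLT F k))
    (hP1 : Module.finrank F P1 = ℓ)
    (hP1int : P1 ⊓ Polynomial.degreeLT F k = ⊥)
    (hdeg : P ≤ Polynomial.degreeLT F (d + 1)) :
    Module.finrank F (schurProduct F (P.map (ev α v)) (P.map (ev α v))) ≤
      min (min ((ℓ + 2) * k - 1 - ℓ * (ℓ - 1) / 2) (k + d + ℓ * (ℓ + 1) / 2))
        (2 * d + 1) :=
  stmt9_general α v hP hP0le (hcodim.trans (finrank_degreeLT_s9 F k)) hP1 hdeg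
end

section
/- Let F_q be a finite field with q elements and let s, u be nonnegative integers. The number of pairs (f, g) of polynomials over F_q with deg f = s and deg g = u equals (q−1)² q^{s+u}. If moreover s ≥ 1 and u ≥ 1, then: (1) the number of such pairs with gcd(f, g) of degree 0 (i.e., f and g coprime) equals (q−1)³ q^{s+u−1}; (2) for every integer i with 0 ≤ i < min{s, u}, the number of such pairs with deg(gcd(f, g)) = i equals (q−1)³ q^{s+u−i−1}. -/
open Polynomial

/-!
Dividing a pair by its monic gcd shows that a pair of degrees `(s, u)` with gcd of degree `i` is
the same as a monic polynomial of degree `i` together with a coprime pair of degrees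
`(s - i, u - i)`. Hence, if `T (s, u) = (q - 1)² q ^ (s + u)` counts all pairs and `C (s, u)` the
coprime ones, then `T (s, u) = ∑ i ≤ min s u, q ^ i * C (s - i, u - i)`. Comparing this sum for
`(s + 1, u + 1)` and for `(s, u)` leaves `T (s + 1, u + 1) = C (s + 1, u + 1) + q * T (s, u)`,
which determines `C`.
-/

section Fibers

variable {α β : Type*}

theorem ncard_eq_sum_ncard_fiber {A : Set α} (hA : A.Finite) {f : α → β} {t : Finset β}
    (hf : A.MapsTo f t) : A.ncard = ∑ b ∈ t, {a ∈ A | f a = b}.ncard := by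
  classical
  have hf' : (hA.toFinset : Set α).MapsTo f t := by rwa [hA.coe_toFinset]
  rw [Set.ncard_eq_toFinset_card A hA, Finset.card_eq_sum_card_fiberwise hf']
  refine Finset.sum_congr rfl fun b _ => ?_
  rw [← Set.ncard_coe_finset, Finset.coe_filter]
  simp only [Set.Finite.mem_toFinset]

end Fibers

section EuclideanDomain

variable {R : Type*} [EuclideanDomain R] [DecidableEq R]

theorem associated_gcd_mul_left (d a b : R) :
    Associated (EuclideanDomain.gcd (d * a) (d * b)) (d * EuclideanDomain.gcd a b) :=
  letI := EuclideanDomain.gcdMonoid R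
  gcd_mul_left' d a b

theorem associated_gcd_mul_left_iff_isCoprime {d : R} (hd : d ≠ 0) {a b : R} :
    Associated (EuclideanDomain.gcd (d * a) (d * b)) d ↔ IsCoprime a b := by
  rw [← EuclideanDomain.gcd_isUnit_iff]
  refine ⟨fun h => isUnit_of_associated_mul ((associated_gcd_mul_left d a b).symm.trans h) hd,
    fun h => (associated_gcd_mul_left d a b).trans (associated_mul_unit_left d _ h)⟩

end EuclideanDomain

section CountingByDegree

variable (R : Type*) [Semiring R]

/-- The polynomials of exact degree `n`; the zero polynomial belongs to none of these sets. -/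
def polysOfDegree (n : ℕ) : Set R[X] := {p | p.degree = n}

/-- The monic polynomials of degree `n`, the possible normalized gcds of degree `n`. -/
def monicsOfDegree (n : ℕ) : Set R[X] := {p | p.Monic ∧ p.natDegree = n}

theorem ncard_degreeLT (n : ℕ) : (degreeLT R n : Set R[X]).ncard = Nat.card R ^ n := by
  rw [← Nat.card_coe_set_eq]
  exact (Nat.card_congr (degreeLTEquiv R n).toEquiv).trans (by simp [Nat.card_fun])

theorem ncard_monicsOfDegree [Nontrivial R] (n : ℕ) :
    (monicsOfDegree R n).ncard = Nat.card R ^ n := by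
  rw [← ncard_degreeLT]
  exact Set.ncard_congr' (monicEquivDegreeLT n)

theorem polysOfDegree_eq_degreeLT_sdiff (n : ℕ) :
    polysOfDegree R n = (degreeLT R (n + 1) : Set R[X]) \ degreeLT R n := by
  ext p
  rw [degreeLT_succ_eq_degreeLE]
  simp only [polysOfDegree, Set.mem_ofPred_eq, Set.mem_sdiff, SetLike.mem_coe, mem_degreeLE,
    mem_degreeLT, not_lt, le_antisymm_iff]

variable [Finite R]

theorem finite_degreeLT (n : ℕ) : (degreeLT R n : Set R[X]).Finite :=
  Set.finite_coe_iff.1 (Finite.of_equiv _ (degreeLTEquiv R n).symm.toEquiv)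

theorem finite_polysOfDegree (n : ℕ) : (polysOfDegree R n).Finite := by
  rw [polysOfDegree_eq_degreeLT_sdiff]
  exact (finite_degreeLT R (n + 1)).sdiff

theorem ncard_polysOfDegree (n : ℕ) :
    (polysOfDegree R n).ncard = (Nat.card R - 1) * Nat.card R ^ n := by
  rw [polysOfDegree_eq_degreeLT_sdiff,
    Set.ncard_sdiff (degreeLT_mono n.le_succ) (finite_degreeLT R n), ncard_degreeLT,
    ncard_degreeLT, pow_succ', Nat.sub_one_mul]

theorem ncard_polysOfDegree_prod (s u : ℕ) :
    (polysOfDegree R s ×ˢ polysOfDegree R u).ncard =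
      (Nat.card R - 1) ^ 2 * Nat.card R ^ (s + u) := by
  rw [Set.ncard_prod, ncard_polysOfDegree, ncard_polysOfDegree]
  ring

end CountingByDegree

theorem ne_zero_of_mem_polysOfDegree {R : Type*} [Semiring R] {p : R[X]} {n : ℕ}
    (hp : p ∈ polysOfDegree R n) : p ≠ 0 := by
  rintro rfl
  simp [polysOfDegree] at hp

theorem mul_mem_polysOfDegree_add_iff {R : Type*} [Semiring R] [NoZeroDivisors R] {d a : R[X]}
    {i n : ℕ} (hd : d ∈ polysOfDegree R i) :
    d * a ∈ polysOfDegree R (n + i) ↔ a ∈ polysOfDegree R n := by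
  rw [polysOfDegree, Set.mem_ofPred_eq] at hd
  rw [polysOfDegree, polysOfDegree, Set.mem_ofPred_eq, Set.mem_ofPred_eq, degree_mul, hd,
    Nat.cast_add, add_comm, WithBot.add_right_inj (WithBot.natCast_ne_bot i)]

theorem monicsOfDegree_subset_polysOfDegree (R : Type*) [Semiring R] [Nontrivial R] (n : ℕ) :
    monicsOfDegree R n ⊆ polysOfDegree R n := by
  rintro p ⟨hp, rfl⟩
  exact degree_eq_natDegree hp.ne_zero

section Pairs

variable (F : Type*) [Field F]

/-- The coprime pairs of polynomials of exact degrees `s` and `u`. -/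
def coprimePairs (s u : ℕ) : Set (F[X] × F[X]) :=
  {p ∈ polysOfDegree F s ×ˢ polysOfDegree F u | IsCoprime p.1 p.2}

theorem injOn_smul_coprimePairs (s u i : ℕ) :
    Set.InjOn (fun t : F[X] × F[X] × F[X] => t.1 • t.2)
      (monicsOfDegree F i ×ˢ coprimePairs F s u) := by
  classical
  rintro ⟨d, a, b⟩ ⟨⟨hd, -⟩, -, hab⟩ ⟨d', a', b'⟩ ⟨⟨hd', -⟩, -, hab'⟩ h
  obtain ⟨ha, hb⟩ : d * a = d' * a' ∧ d * b = d' * b' := Prod.mk.inj h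
  have hgcd : Associated (EuclideanDomain.gcd (d * a) (d * b)) d :=
    (associated_gcd_mul_left_iff_isCoprime hd.ne_zero).2 hab
  have hgcd' : Associated (EuclideanDomain.gcd (d * a) (d * b)) d' := by
    rw [ha, hb]
    exact (associated_gcd_mul_left_iff_isCoprime hd'.ne_zero).2 hab'
  obtain rfl : d = d' := eq_of_monic_of_associated hd hd' (hgcd.symm.trans hgcd')
  obtain rfl : a = a' := mul_left_cancel₀ hd.ne_zero ha
  obtain rfl : b = b' := mul_left_cancel₀ hd.ne_zero hb
  rfl

variable [DecidableEq F]

/-- The pairs of polynomials of exact degrees `s` and `u` whose gcd has degree `i`. As neither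
polynomial is zero, the gcd is nonzero and `natDegree` is its true degree. -/
def pairsWithGcdDegree (s u i : ℕ) : Set (F[X] × F[X]) :=
  {p ∈ polysOfDegree F s ×ˢ polysOfDegree F u | (EuclideanDomain.gcd p.1 p.2).natDegree = i}

variable {F} in
theorem natDegree_gcd_le_min {s u : ℕ} {p : F[X] × F[X]}
    (hp : p ∈ polysOfDegree F s ×ˢ polysOfDegree F u) :
    (EuclideanDomain.gcd p.1 p.2).natDegree ≤ min s u := by
  obtain ⟨hs, hu⟩ := hp
  rw [← natDegree_eq_of_degree_eq_some hs, ← natDegree_eq_of_degree_eq_some hu]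
  exact le_min
    (natDegree_le_of_dvd (EuclideanDomain.gcd_dvd_left _ _) (ne_zero_of_mem_polysOfDegree hs))
    (natDegree_le_of_dvd (EuclideanDomain.gcd_dvd_right _ _) (ne_zero_of_mem_polysOfDegree hu))

theorem mapsTo_smul_pairsWithGcdDegree (s u i : ℕ) :
    Set.MapsTo (fun t : F[X] × F[X] × F[X] => t.1 • t.2)
      (monicsOfDegree F i ×ˢ coprimePairs F s u) (pairsWithGcdDegree F (s + i) (u + i) i) := by
  rintro ⟨d, a, b⟩ ⟨hd, ⟨ha, hb⟩, hab⟩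
  have hdeg : d ∈ polysOfDegree F i := monicsOfDegree_subset_polysOfDegree F i hd
  have hgcd : Associated (EuclideanDomain.gcd (d * a) (d * b)) d :=
    (associated_gcd_mul_left_iff_isCoprime hd.1.ne_zero).2 hab
  exact ⟨⟨(mul_mem_polysOfDegree_add_iff hdeg).2 ha, (mul_mem_polysOfDegree_add_iff hdeg).2 hb⟩,
    (natDegree_eq_of_degree_eq (degree_eq_degree_of_associated hgcd)).trans hd.2⟩

theorem surjOn_smul_pairsWithGcdDegree (s u i : ℕ) :
    Set.SurjOn (fun t : F[X] × F[X] × F[X] => t.1 • t.2)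
      (monicsOfDegree F i ×ˢ coprimePairs F s u) (pairsWithGcdDegree F (s + i) (u + i) i) := by
  rintro ⟨f, g⟩ ⟨⟨hf, hg⟩, hi⟩
  have hne : EuclideanDomain.gcd f g ≠ 0 := fun h =>
    ne_zero_of_mem_polysOfDegree hf (EuclideanDomain.gcd_eq_zero_iff.1 h).1
  obtain ⟨d, hd, hgcd⟩ : ∃ d : F[X], d.Monic ∧ Associated (EuclideanDomain.gcd f g) d :=
    ⟨normalize _, monic_normalize hne, associated_normalize _⟩
  have hdi : d ∈ monicsOfDegree F i :=
    ⟨hd, (natDegree_eq_of_degree_eq (degree_eq_degree_of_associated hgcd)).symm.trans hi⟩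
  have hdeg : d ∈ polysOfDegree F i := monicsOfDegree_subset_polysOfDegree F i hdi
  obtain ⟨a, rfl⟩ : d ∣ f := hgcd.symm.dvd.trans (EuclideanDomain.gcd_dvd_left _ _)
  obtain ⟨b, rfl⟩ : d ∣ g := hgcd.symm.dvd.trans (EuclideanDomain.gcd_dvd_right _ _)
  exact ⟨(d, a, b), ⟨hdi, ⟨(mul_mem_polysOfDegree_add_iff hdeg).1 hf,
    (mul_mem_polysOfDegree_add_iff hdeg).1 hg⟩,
    (associated_gcd_mul_left_iff_isCoprime hd.ne_zero).1 hgcd⟩, rfl⟩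

theorem bijOn_smul_pairsWithGcdDegree (s u i : ℕ) :
    Set.BijOn (fun t : F[X] × F[X] × F[X] => t.1 • t.2)
      (monicsOfDegree F i ×ˢ coprimePairs F s u) (pairsWithGcdDegree F (s + i) (u + i) i) :=
  ⟨mapsTo_smul_pairsWithGcdDegree F s u i, injOn_smul_coprimePairs F s u i,
    surjOn_smul_pairsWithGcdDegree F s u i⟩

theorem ncard_pairsWithGcdDegree_eq_mul {s u i : ℕ} (hi : i ≤ min s u) :
    (pairsWithGcdDegree F s u i).ncard =
      Nat.card F ^ i * (coprimePairs F (s - i) (u - i)).ncard := by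
  obtain ⟨his, hiu⟩ := le_min_iff.1 hi
  have hbij := bijOn_smul_pairsWithGcdDegree F (s - i) (u - i) i
  rw [Nat.sub_add_cancel his, Nat.sub_add_cancel hiu] at hbij
  rw [← hbij.ncard_eq, Set.ncard_prod, ncard_monicsOfDegree]

end Pairs

section CoprimeCount

variable (F : Type*) [Field F] [Finite F]

theorem ncard_polysOfDegree_prod_eq_sum (s u : ℕ) :
    (polysOfDegree F s ×ˢ polysOfDegree F u).ncard =
      ∑ i ∈ Finset.range (min s u + 1),
        Nat.card F ^ i * (coprimePairs F (s - i) (u - i)).ncard := by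
  classical
  have hfin := (finite_polysOfDegree F s).prod (finite_polysOfDegree F u)
  calc (polysOfDegree F s ×ˢ polysOfDegree F u).ncard
      = ∑ i ∈ Finset.range (min s u + 1), (pairsWithGcdDegree F s u i).ncard :=
        ncard_eq_sum_ncard_fiber hfin fun _ hp =>
          Finset.mem_coe.2 (Finset.mem_range_succ_iff.2 (natDegree_gcd_le_min hp))
    _ = _ := Finset.sum_congr rfl fun _ hi =>
        ncard_pairsWithGcdDegree_eq_mul F (Finset.mem_range_succ_iff.1 hi)

theorem ncard_polysOfDegree_prod_succ (s u : ℕ) :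
    (polysOfDegree F (s + 1) ×ˢ polysOfDegree F (u + 1)).ncard =
      (coprimePairs F (s + 1) (u + 1)).ncard +
        Nat.card F * (polysOfDegree F s ×ˢ polysOfDegree F u).ncard := by
  rw [ncard_polysOfDegree_prod_eq_sum F (s + 1), ncard_polysOfDegree_prod_eq_sum F s,
    Nat.add_min_add_right, Finset.sum_range_succ', Finset.mul_sum, add_comm]
  simp only [pow_zero, one_mul, Nat.sub_zero, Nat.add_sub_add_right, pow_succ', mul_assoc]

theorem ncard_coprimePairs_succ (s u : ℕ) :
    (coprimePairs F (s + 1) (u + 1)).ncard =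
      (Nat.card F - 1) ^ 3 * Nat.card F ^ (s + u + 1) := by
  have hrec := ncard_polysOfDegree_prod_succ F s u
  rw [ncard_polysOfDegree_prod, ncard_polysOfDegree_prod] at hrec
  obtain ⟨c, hc⟩ : ∃ c, Nat.card F = c + 1 := Nat.exists_eq_add_one.2 Nat.card_pos
  rw [hc, Nat.add_sub_cancel] at hrec ⊢
  zify at hrec ⊢
  linear_combination -hrec

theorem ncard_pairsWithGcdDegree [DecidableEq F] {s u i : ℕ} (hi : i < min s u) :
    (pairsWithGcdDegree F s u i).ncard =
      (Nat.card F - 1) ^ 3 * Nat.card F ^ (s + u - i - 1) := by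
  rw [ncard_pairsWithGcdDegree_eq_mul F hi.le]
  obtain ⟨a, ha⟩ : ∃ a, s - i = a + 1 := ⟨s - i - 1, by omega⟩
  obtain ⟨b, hb⟩ : ∃ b, u - i = b + 1 := ⟨u - i - 1, by omega⟩
  have hexp : s + u - i - 1 = i + (a + b + 1) := by omega
  rw [ha, hb, ncard_coprimePairs_succ, hexp]
  ring

end CoprimeCount

/-- Counting pairs of polynomials over `F_q` of exact degrees `s` and `u`:
there are `(q−1)² q^{s+u}` such pairs; if `s, u ≥ 1` then `(q−1)³ q^{s+u−1}` of them
are coprime (gcd of degree 0), and for `0 ≤ i < min{s,u}` exactly `(q−1)³ q^{s+u−i−1}`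
of them have `deg(gcd) = i`. -/
theorem stmt15 {F : Type*} [Field F] [Fintype F] [DecidableEq F] (s u : ℕ) :
    Set.ncard {p : Polynomial F × Polynomial F |
        p.1.degree = (s : WithBot ℕ) ∧ p.2.degree = (u : WithBot ℕ)} =
      (Fintype.card F - 1) ^ 2 * Fintype.card F ^ (s + u) ∧
    (1 ≤ s → 1 ≤ u →
      (Set.ncard {p : Polynomial F × Polynomial F |
          p.1.degree = (s : WithBot ℕ) ∧ p.2.degree = (u : WithBot ℕ) ∧
          (EuclideanDomain.gcd p.1 p.2).natDegree = 0} =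
        (Fintype.card F - 1) ^ 3 * Fintype.card F ^ (s + u - 1)) ∧
      ∀ i < min s u,
        Set.ncard {p : Polynomial F × Polynomial F |
            p.1.degree = (s : WithBot ℕ) ∧ p.2.degree = (u : WithBot ℕ) ∧
            (EuclideanDomain.gcd p.1 p.2).natDegree = i} =
          (Fintype.card F - 1) ^ 3 * Fintype.card F ^ (s + u - i - 1)) := by
  simp only [← Nat.card_eq_fintype_card, ← and_assoc]
  refine ⟨ncard_polysOfDegree_prod F s u, fun hs hu => ⟨?_, fun i hi => ?_⟩⟩
  · exact ncard_pairsWithGcdDegree F (lt_min hs hu)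
  · exact ncard_pairsWithGcdDegree F hi
end
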